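/- Let 1 ≤ p < ∞, let B_w be a bounded weighted backward shift on ℓ^p(ℕ), and let Λ be a subset of (0,+∞) with at least two elements. Assume λ_w = r_{p,w}, where λ_w := limsup_{n→∞} |w_1 ⋯ w_n|^{1/n} and r_{p,w}^{−1} := limsup_{n→∞} |w_1 ⋯ w_n|^{−1/n}. Then ⋂_{λ∈Λ} FHC(λB_w) ≠ ∅ if and only if Λ is countable and relatively compact in (r_{p,w}^{−1}, +∞). -/

import Mathlib

open Filter Topology
open scoped ENNReal NNReal

/-- Lower density of a set of natural numbers. -/
noncomputable def lowerDensity (E : Set ℕ) : ℝ :=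
  Filter.liminf (fun n : ℕ =>
    (∑ k ∈ Finset.range (n + 1), Set.indicator E (fun _ => (1 : ℝ)) k) / ((n : ℝ) + 1))
    Filter.atTop

/-- The set of frequently hypercyclic vectors of an operator. -/
noncomputable def FHC {X : Type*} [NormedAddCommGroup X] [NormedSpace ℂ X]
    (T : X →L[ℂ] X) : Set X :=
  {x | ∀ U : Set X, IsOpen U → U.Nonempty → 0 < lowerDensity {n : ℕ | (T ^ n) x ∈ U}}

/-- `λ_w = limsup_n |w₁⋯w_n|^{1/n}`, computed in `ℝ≥0∞`. -/
noncomputable def lamw (w : ℕ → ℂ) : ℝ≥0∞ :=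
  Filter.limsup
    (fun n : ℕ => (∏ k ∈ Finset.Icc 1 n, (‖w k‖₊ : ℝ≥0∞)) ^ (1 / (n : ℝ)))
    Filter.atTop

/-- `r_{p,w}⁻¹ = limsup_n |w₁⋯w_n|^{-1/n}`, computed in `ℝ≥0∞`. -/
noncomputable def rpwInv (w : ℕ → ℂ) : ℝ≥0∞ :=
  Filter.limsup
    (fun n : ℕ => ((∏ k ∈ Finset.Icc 1 n, (‖w k‖₊ : ℝ≥0∞))⁻¹) ^ (1 / (n : ℝ)))
    Filter.atTop


theorem lowerDensity_pos_of {E : Set ℕ} {c : ℝ} (hc : 0 < c)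
    (h : ∀ᶠ n : ℕ in atTop, c * ((n : ℝ) + 1) ≤
      ∑ k ∈ Finset.range (n + 1), Set.indicator E (fun _ => (1 : ℝ)) k) :
    0 < lowerDensity E := by
  refine lt_of_lt_of_le hc ?_
  unfold lowerDensity
  refine le_liminf_of_le ?_ ?_
  · refine IsBoundedUnder.isCoboundedUnder_ge ⟨1, ?_⟩
    refine Filter.eventually_map.2 (Eventually.of_forall fun n => ?_)
    refine (div_le_one (by positivity)).2 ?_
    calc _ ≤ ∑ k ∈ Finset.range (n + 1), (1 : ℝ) := by
          refine Finset.sum_le_sum fun k _ => ?_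
          exact Set.indicator_le_self' (fun _ _ => zero_le_one) k
      _ = _ := by simp
  · filter_upwards [h] with n hn
    rw [le_div_iff₀ (by positivity)]
    exact hn

theorem of_lowerDensity_pos {E : Set ℕ} (h : 0 < lowerDensity E) :
    ∃ K : ℕ, 1 ≤ K ∧ ∀ᶠ n : ℕ in atTop, ((n : ℝ) + 1) ≤
      K * ∑ k ∈ Finset.range (n + 1), Set.indicator E (fun _ => (1 : ℝ)) k := by
  obtain ⟨c, hc0, hc⟩ := exists_between h
  obtain ⟨K, hK⟩ := exists_nat_gt (1 / c)
  have hK0 : (0 : ℝ) < K := lt_trans (by positivity) hK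
  refine ⟨K, by exact_mod_cast hK0, ?_⟩
  have := eventually_lt_of_lt_liminf hc ⟨0, by
    refine Filter.eventually_map.2 (Eventually.of_forall fun n => ?_)
    refine div_nonneg (Finset.sum_nonneg fun k _ => Set.indicator_nonneg (by simp) k) (by positivity)⟩
  filter_upwards [this] with n hn
  rw [lt_div_iff₀ (by positivity)] at hn
  have h1 : 1 ≤ K * c := by
    rw [div_lt_iff₀ hc0] at hK; exact hK.le
  nlinarith [mul_lt_mul_of_pos_left hn hK0, mul_le_mul_of_nonneg_right h1 (by positivity : (0:ℝ) ≤ (n:ℝ)+1)]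

theorem dens_gap {E : Set ℕ} (h : 0 < lowerDensity E) :
    ∃ K : ℕ, 1 ≤ K ∧ ∀ᶠ M : ℕ in atTop, ∃ n ∈ E, M ≤ n ∧ n ≤ K * M := by
  obtain ⟨K, hK, h⟩ := of_lowerDensity_pos h
  refine ⟨K, hK, ?_⟩
  have ht : Tendsto (fun M : ℕ => K * M) atTop atTop :=
    tendsto_id.const_mul_atTop' (by omega)
  filter_upwards [ht.eventually h] with M hM
  by_contra! hcon
  have : ∑ k ∈ Finset.range (K * M + 1), Set.indicator E (fun _ => (1 : ℝ)) k ≤ M := by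
    calc _ ≤ ∑ k ∈ Finset.range (K * M + 1), if k < M then (1:ℝ) else 0 := by
          refine Finset.sum_le_sum fun k hk => ?_
          by_cases hkE : k ∈ E
          · have : k < M := by
              by_contra hlt
              have := hcon k hkE (by omega)
              simp at hk; omega
            simp [hkE, this]
          · simp [hkE]; split_ifs <;> norm_num
      _ = ∑ k ∈ (Finset.range (K * M + 1)).filter (· < M), (1 : ℝ) := by
          rw [Finset.sum_filter]
      _ ≤ ∑ k ∈ Finset.range M, (1 : ℝ) := by
          refine Finset.sum_le_sum_of_subset_of_nonneg ?_ (by simp)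
          intro k hk; simp at hk ⊢; omega
      _ = M := by simp
  push_cast at hM
  have hK0 : (0 : ℝ) ≤ K := by positivity
  nlinarith [mul_le_mul_of_nonneg_left this hK0]

theorem exists_blocks (prec : ℕ → ℕ → Prop)
    (prec_trans : ∀ a b c, prec a b → prec b c → prec a c) (prec_irr : ∀ a, ¬ prec a a) :
    ∃ d f : ℕ → ℝ, (∀ l, 0 < d l) ∧ (∀ l, 0 ≤ f l) ∧ (∀ l, f l + d l ≤ 1) ∧
      (∀ a b, prec a b → f a + d a ≤ f b) := by
  classical
  let d : ℕ → ℝ := fun l => (1 / 2) ^ (l + 1)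
  have hd0 : ∀ l, 0 < d l := fun l => by positivity
  have hdsum : HasSum d 1 := by
    have := hasSum_geometric_two' (1 : ℝ)
    convert this using 1
    funext l; simp only [d]; rw [div_div, ← pow_succ', one_div, one_div, inv_pow]
  have hsumm : ∀ (P : ℕ → Prop) [DecidablePred P],
      Summable (fun l => if P l then d l else 0) := fun P _ =>
    Summable.of_nonneg_of_le (fun l => by split_ifs <;> [exact (hd0 l).le; exact le_rfl])
      (fun l => by split_ifs <;> [exact le_rfl; exact (hd0 l).le]) hdsum.summable
  let f : ℕ → ℝ := fun l => ∑' j, if prec j l then d j else 0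
  have hf0 : ∀ l, 0 ≤ f l := fun l => tsum_nonneg fun j => by
    split_ifs <;> [exact (hd0 j).le; exact le_rfl]
  have hfd : ∀ l, f l + d l = ∑' j, if prec j l ∨ j = l then d j else 0 := by
    intro l
    have h1 : HasSum (fun j => if j = l then d j else 0) (d l) := by
      have := hasSum_ite_eq l (d l)
      refine this.congr_fun ?_ |> fun h => h
      intro j; split_ifs with h <;> simp [h]
    have h2 := (hsumm (fun j => prec j l)).hasSum.add h1
    refine h2.tsum_eq.symm.trans ?_
    congr 1; funext j
    by_cases hj : j = l
    · subst hj; simp [prec_irr]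
    · simp [hj]
  have hf1 : ∀ l, f l + d l ≤ 1 := by
    intro l; rw [hfd l, ← hdsum.tsum_eq]
    refine Summable.tsum_le_tsum (fun j => ?_) (hsumm (fun j => prec j l ∨ j = l)) hdsum.summable
    split_ifs <;> [exact le_rfl; exact (hd0 j).le]
  have hfp : ∀ a b, prec a b → f a + d a ≤ f b := by
    intro a b hab
    rw [hfd]
    refine Summable.tsum_le_tsum (fun j => ?_)
      (hsumm (fun j => prec j a ∨ j = a)) (hsumm (fun j => prec j b))
    by_cases h : prec j a ∨ j = a
    · have : prec j b := by
        rcases h with h | h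
        · exact prec_trans _ _ _ h hab
        · exact h ▸ hab
      simp [h, this]
    · simp only [h, if_false]; split_ifs <;> [exact (hd0 j).le; exact le_rfl]
  exact ⟨d, f, hd0, hf0, hf1, hfp⟩

theorem exists_sets (lam : ℕ → ℝ) (N : ℕ → ℕ) (hN : ∀ l, 1 ≤ N l) (T0 : ℕ) :
    ∃ A : ℕ → Set ℕ, (∀ l, 0 < lowerDensity (A l)) ∧ (∀ l, ∀ n ∈ A l, N l ≤ n) ∧
      (∀ l l', ∀ n ∈ A l, ∀ m ∈ A l', n < m → n + N l ≤ m ∧ n + N l' ≤ m) ∧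
      (∀ l l', ∀ n ∈ A l, n ∈ A l' → l = l') ∧
      (∀ l l', ∀ m ∈ A l, ∀ n ∈ A l', m < n → lam l' < lam l → m * T0 ≤ n) := by
  classical
  let prec : ℕ → ℕ → Prop := fun a b => lam a < lam b ∨ (lam a = lam b ∧ a < b)
  have prec_tri : ∀ a b, a ≠ b → prec a b ∨ prec b a := by
    intro a b hab
    rcases lt_trichotomy (lam a) (lam b) with h | h | h
    · exact Or.inl (Or.inl h)
    · rcases lt_or_gt_of_ne hab with h' | h'
      · exact Or.inl (Or.inr ⟨h, h'⟩)
      · exact Or.inr (Or.inr ⟨h.symm, h'⟩)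
    · exact Or.inr (Or.inl h)
  have prec_trans : ∀ a b c, prec a b → prec b c → prec a c := by
    rintro a b c (h | ⟨h, h1⟩) (h' | ⟨h', h1'⟩)
    · exact Or.inl (h.trans h')
    · exact Or.inl (h'  ▸ h)
    · exact Or.inl (h  ▸ h')
    · exact Or.inr ⟨h.trans h', h1.trans h1'⟩
  have prec_irr : ∀ a, ¬ prec a a := by
    rintro a (h | ⟨h, h1⟩)
    · exact lt_irrefl _ h
    · exact lt_irrefl _ h1
  obtain ⟨d, f, hd0, hf0, hf1, hfp⟩ := exists_blocks prec prec_trans prec_irr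
  let T : ℕ := 2 * T0 + 2
  have hT2 : (2 : ℝ) ≤ T := by simp [T]
  have hT0 : (0 : ℝ) < T := by linarith
  have hTpos : ∀ k : ℕ, (0 : ℝ) < (T : ℝ) ^ k := fun k => by positivity
  have hk : ∀ l, ∃ k : ℕ, (N l : ℝ) ≤ (T : ℝ) ^ k * (d l / 3) := by
    intro l
    obtain ⟨k, hk⟩ := pow_unbounded_of_one_lt ((N l : ℝ) / (d l / 3)) (by linarith : (1 : ℝ) < T)
    exact ⟨k, by rw [div_lt_iff₀ (by have := hd0 l; positivity)] at hk; exact hk.le⟩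
  choose kk hkk using hk
  have hkk' : ∀ l k, kk l ≤ k → (N l : ℝ) ≤ (T : ℝ) ^ k * (d l / 3) := by
    intro l k h
    refine (hkk l).trans ?_
    have := hd0 l
    gcongr
    linarith
  let Blk : ℕ → ℕ → ℕ → Prop := fun l k n => kk l ≤ k ∧ N l ∣ n ∧
    (T : ℝ) ^ k * (1 + f l + d l / 3) ≤ n ∧ (n : ℝ) ≤ (T : ℝ) ^ k * (1 + f l + 2 * d l / 3)
  have key : ∀ l l' k k' n m, Blk l k n → Blk l' k' m → (k < k' ∨ (k = k' ∧ prec l l')) →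
      n + N l ≤ m ∧ n + N l' ≤ m := by
    rintro l l' k k' n m ⟨h1, -, -, h4⟩ ⟨g1, -, g3, -⟩ hor
    have e1 := hkk' l k h1
    have e2 := hkk' l' k' g1
    have hNl : (1 : ℝ) ≤ N l := by exact_mod_cast hN l
    have hNl' : (1 : ℝ) ≤ N l' := by exact_mod_cast hN l'
    have : (n : ℝ) + N l + N l' ≤ m := by
      rcases hor with h | ⟨rfl, h⟩
      · have hTT : (T : ℝ) ^ k * 2 ≤ (T : ℝ) ^ k' := by
          calc (T : ℝ) ^ k * 2 ≤ (T : ℝ) ^ k * T := by gcongr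
            _ = (T : ℝ) ^ (k + 1) := by ring
            _ ≤ _ := by gcongr <;> [linarith; omega]
        have a1 : (T : ℝ) ^ k * (1 + f l + d l) ≤ (T : ℝ) ^ k * 2 := by
          have := hf1 l
          gcongr; linarith
        have a2 : 0 ≤ (T : ℝ) ^ k' * f l' := mul_nonneg (hTpos _).le (hf0 _)
        nlinarith
      · have := mul_le_mul_of_nonneg_left (hfp _ _ h) (hTpos k).le
        nlinarith
    constructor
    · have : (n : ℝ) + N l ≤ m := by linarith
      exact_mod_cast this
    · have : (n : ℝ) + N l' ≤ m := by linarith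
      exact_mod_cast this
  refine ⟨fun l => {n | ∃ k, Blk l k n}, ?_, ?_, ?_, ?_, ?_⟩
  · intro l
    have hdl := hd0 l
    have hNl : (0 : ℝ) < N l := by exact_mod_cast hN l
    set c : ℝ := d l / 3 / N l with hc
    have hc0 : 0 < c := by positivity
    refine lowerDensity_pos_of (c := c / (8 * T)) (by positivity) ?_
    -- choose k0 with c T^k0 ≥ 2
    obtain ⟨k0, hk0⟩ := pow_unbounded_of_one_lt (2 / c) (by linarith : (1 : ℝ) < T)
    rw [div_lt_iff₀ hc0] at hk0
    filter_upwards [eventually_ge_atTop (2 * T ^ (k0 + kk l))] with n hn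
    have hTn : 1 < T := by simp [T]
    have hn2 : T ^ (k0 + kk l) ≤ n / 2 := by omega
    have hne : n / 2 ≠ 0 := by
      have : 0 < T ^ (k0 + kk l) := by positivity
      omega
    set k := Nat.log T (n / 2) with hkdef
    have hkl : k0 + kk l ≤ k := (Nat.le_log_iff_pow_le hTn hne).2 hn2
    have hk1 : T ^ k ≤ n / 2 := Nat.pow_log_le_self T hne
    have hk2 : n / 2 < T ^ (k + 1) := Nat.lt_pow_succ_log_self hTn _
    have hk1' : (T : ℝ) ^ k * 2 ≤ n := by
      have : T ^ k * 2 ≤ n := by omega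
      exact_mod_cast this
    have hk2' : (n : ℝ) + 1 ≤ (T : ℝ) ^ k * (2 * T) := by
      have : n + 1 ≤ T ^ k * (2 * T) := by rw [pow_succ] at hk2; nlinarith [Nat.div_add_mod n 2, Nat.mod_lt n two_pos]
      exact_mod_cast this
    have hcT : 2 ≤ (T : ℝ) ^ k * c := by
      have : (T : ℝ) ^ k0 ≤ (T : ℝ) ^ k := by gcongr <;> [linarith; omega]
      nlinarith
    -- multiples
    set x0 : ℝ := (T : ℝ) ^ k * (1 + f l + d l / 3) / N l with hx0
    set x1 : ℝ := (T : ℝ) ^ k * (1 + f l + 2 * d l / 3) / N l with hx1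
    have hx01 : x1 - x0 = (T : ℝ) ^ k * c := by
      rw [hx0, hx1, hc]; field_simp; ring
    have hx00 : 0 ≤ x0 := by have := hf0 l; positivity
    set S : Finset ℕ := (Finset.Icc ⌈x0⌉₊ ⌊x1⌋₊).image (fun j => N l * j) with hS
    have hScard : S.card = ⌊x1⌋₊ + 1 - ⌈x0⌉₊ := by
      rw [hS, Finset.card_image_of_injective _ (fun a b h => Nat.eq_of_mul_eq_mul_left (hN l) h)]
      simp
    have hScard' : (T : ℝ) ^ k * c / 2 ≤ S.card := by
      rw [hScard]
      have h1 := Nat.lt_floor_add_one x1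
      have h2 := Nat.ceil_lt_add_one hx00
      have h3 : (⌊x1⌋₊ : ℝ) + 1 ≤ ((⌊x1⌋₊ + 1 - ⌈x0⌉₊ : ℕ) : ℝ) + ⌈x0⌉₊ := by
        have : ⌊x1⌋₊ + 1 ≤ (⌊x1⌋₊ + 1 - ⌈x0⌉₊) + ⌈x0⌉₊ := by omega
        exact_mod_cast this
      linarith
    have hSmem : ∀ s ∈ S, s ∈ Finset.range (n + 1) ∧ Blk l k s := by
      intro s hs
      rw [hS, Finset.mem_image] at hs
      obtain ⟨j, hj, rfl⟩ := hs
      rw [Finset.mem_Icc, Nat.ceil_le, Nat.le_floor_iff (by nlinarith)] at hj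
      have hj1 : (T : ℝ) ^ k * (1 + f l + d l / 3) ≤ (N l * j : ℕ) := by
        have := hj.1; rw [hx0, div_le_iff₀ hNl] at this; push_cast; linarith
      have hj2 : ((N l * j : ℕ) : ℝ) ≤ (T : ℝ) ^ k * (1 + f l + 2 * d l / 3) := by
        have := hj.2; rw [hx1, le_div_iff₀ hNl] at this; push_cast; linarith
      refine ⟨?_, by omega, dvd_mul_right _ _, hj1, hj2⟩
      have : ((N l * j : ℕ) : ℝ) ≤ n := by
        refine hj2.trans (le_trans ?_ hk1')
        have := hf1 l
        gcongr
        linarith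
      have : N l * j ≤ n := by exact_mod_cast this
      simp only [Finset.mem_range]; omega
    calc c / (8 * T) * ((n : ℝ) + 1) ≤ c / (8 * T) * ((T : ℝ) ^ k * (2 * T)) := by gcongr
      _ = (T : ℝ) ^ k * c / 4 := by field_simp; norm_num
      _ ≤ S.card := by nlinarith
      _ = ∑ s ∈ S, Set.indicator {n | ∃ k, Blk l k n} (fun _ => (1 : ℝ)) s := by
          rw [Finset.card_eq_sum_ones]; push_cast
          refine Finset.sum_congr rfl fun s hs => ?_
          rw [Set.indicator_of_mem]
          exact ⟨k, (hSmem s hs).2⟩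
      _ ≤ _ := Finset.sum_le_sum_of_subset_of_nonneg (fun s hs => (hSmem s hs).1)
          (fun s _ _ => Set.indicator_nonneg (by simp) s)
  · rintro l n ⟨k, h1, -, h3, -⟩
    have : (N l : ℝ) ≤ n := by
      refine (hkk' l k h1).trans (le_trans ?_ h3)
      have := hf0 l
      gcongr; linarith
    exact_mod_cast this
  · rintro l l' n ⟨k, hn⟩ m ⟨k', hm⟩ hnm
    by_cases hll : l = l'
    · subst hll
      have : n + N l ≤ m := by
        obtain ⟨a, ha⟩ := hn.2.1
        obtain ⟨b, hb⟩ := hm.2.1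
        subst ha hb
        have : a < b := Nat.lt_of_mul_lt_mul_left hnm
        nlinarith
      exact ⟨this, this⟩
    · rcases lt_trichotomy k k' with h | h | h
      · exact key l l' k k' n m hn hm (Or.inl h)
      · rcases prec_tri l l' hll with h' | h'
        · exact key l l' k k' n m hn hm (Or.inr ⟨h, h'⟩)
        · have := key l' l k' k m n hm hn (Or.inr ⟨h.symm, h'⟩)
          omega
      · have := key l' l k' k m n hm hn (Or.inl h)
        omega
  · rintro l l' n ⟨k, hn⟩ ⟨k', hm⟩
    by_contra hll
    have hNl := hN l
    rcases lt_trichotomy k k' with h | h | h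
    · have := key l l' k k' n n hn hm (Or.inl h)
      omega
    · rcases prec_tri l l' hll with h' | h'
      · have := key l l' k k' n n hn hm (Or.inr ⟨h, h'⟩)
        omega
      · have := key l' l k' k n n hm hn (Or.inr ⟨h.symm, h'⟩)
        omega
    · have := key l' l k' k n n hm hn (Or.inl h)
      omega
  · rintro l l' m ⟨k, hm⟩ n ⟨k', hn⟩ hmn hlam
    have hkk1 : k < k' := by
      by_contra hcon
      have := key l' l k' k n m hn hm (by
        rcases lt_or_eq_of_le (not_lt.1 hcon) with h | h
        · exact Or.inl h
        · exact Or.inr ⟨h, Or.inl hlam⟩)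
      omega
    have h1 : (m : ℝ) ≤ (T : ℝ) ^ k * 2 := by
      refine hm.2.2.2.trans ?_
      have := hf1 l
      have := hd0 l
      gcongr; linarith
    have h2 : (T : ℝ) ^ k' ≤ n := by
      refine le_trans ?_ hn.2.2.1
      have := hf0 l'
      have := hd0 l'
      refine le_mul_of_one_le_right (hTpos _).le (by linarith)
    have h3 : (T : ℝ) ^ (k + 1) ≤ (T : ℝ) ^ k' := by gcongr <;> [linarith; omega]
    have h4 : (m : ℝ) * T0 ≤ n := by
      have hTT : (T : ℝ) = 2 * T0 + 2 := by simp [T]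
      calc (m : ℝ) * T0 ≤ (T : ℝ) ^ k * 2 * T0 := by gcongr
        _ ≤ (T : ℝ) ^ k * T := by rw [mul_assoc]; gcongr; linarith
        _ = (T : ℝ) ^ (k + 1) := by ring
        _ ≤ n := h3.trans h2
    exact_mod_cast h4

theorem exists_common {X : Type*} [NormedAddCommGroup X] [NormedSpace ℂ X] [CompleteSpace X]
    (T : ℝ → X →L[ℂ] X) (lam : ℕ → ℝ) (z : ℕ → ℕ → X) (y : ℕ → X) (Y : ℕ → ℝ) (D : ℕ → ℕ)
    (q : ℝ) (hq0 : 0 < q) (hq1 : q < 1) (T0 : ℕ)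
    (H0 : ∀ l n, ‖z l n‖ ≤ Y l * q ^ (2 * n))
    (H1 : ∀ l n, (T (lam l) ^ n) (z l n) = y l)
    (H2 : ∀ l n m t, n + D l ≤ m → (T t ^ m) (z l n) = 0)
    (H3 : ∀ l l' n m, m < n → lam l' ≤ lam l → ‖(T (lam l') ^ m) (z l n)‖ ≤ Y l * q ^ (2 * (n - m)))
    (H4 : ∀ l l' n m, m < n → m * T0 ≤ n → ‖(T (lam l') ^ m) (z l n)‖ ≤ Y l * q ^ (2 * (n - m))) :
    ∃ x : X, ∀ l, ∃ A : Set ℕ, 0 < lowerDensity A ∧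
      ∀ m ∈ A, ‖(T (lam l) ^ m) x - y l‖ ≤ q ^ l * (1 - q)⁻¹ := by
  classical
  have hN : ∀ l, ∃ N : ℕ, Y l * q ^ N ≤ 1 := by
    intro l
    have : Tendsto (fun N : ℕ => Y l * q ^ N) atTop (𝓝 (Y l * 0)) :=
      (tendsto_pow_atTop_nhds_zero_of_lt_one hq0.le hq1).const_mul _
    rw [mul_zero] at this
    exact ((this.eventually (gt_mem_nhds zero_lt_one)).exists).imp fun N h => h.le
  choose N0 hN0 using hN
  have hY : ∀ l, 0 ≤ Y l := by
    intro l; have := (norm_nonneg _).trans (H0 l 0); simpa using this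
  let N : ℕ → ℕ := fun l => N0 l + D l + l + 1
  have hN1 : ∀ l, 1 ≤ N l := fun l => by simp only [N]; omega
  have hNY : ∀ l k, N l ≤ k → Y l * q ^ (2 * k) ≤ q ^ k := by
    intro l k hk
    have : q ^ k ≤ q ^ N0 l := pow_le_pow_of_le_one hq0.le hq1.le (by simp only [N] at hk; omega)
    calc Y l * q ^ (2 * k) = Y l * q ^ k * q ^ k := by ring
      _ ≤ 1 * q ^ k := by
        gcongr
        exact (mul_le_mul_of_nonneg_left this (hY l)).trans (hN0 l)
      _ = q ^ k := one_mul _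
  obtain ⟨A, hA1, hA2, hA3, hA4, hA5⟩ := exists_sets lam N hN1 T0
  let Z : ℕ → X := fun n => if h : ∃ l, n ∈ A l then z h.choose n else 0
  have hZ : ∀ l n, n ∈ A l → Z n = z l n := by
    intro l n hn
    have h : ∃ l, n ∈ A l := ⟨l, hn⟩
    simp only [Z, dif_pos h]
    rw [hA4 _ _ n h.choose_spec hn]
  have hZ0 : ∀ n, (¬ ∃ l, n ∈ A l) → Z n = 0 := fun n h => by simp only [Z, dif_neg h]
  have hgeo := summable_geometric_of_lt_one hq0.le hq1
  have hZsum : Summable Z := by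
    refine Summable.of_norm_bounded hgeo fun n => ?_
    by_cases h : ∃ l, n ∈ A l
    · obtain ⟨l, hl⟩ := h
      rw [hZ l n hl]
      exact (H0 l n).trans (hNY l n (hA2 l n hl))
    · rw [hZ0 n h]; simp; positivity
  refine ⟨∑' n, Z n, fun l => ⟨A l, hA1 l, fun m hm => ?_⟩⟩
  rw [ContinuousLinearMap.map_tsum _ hZsum]
  have hsum2 : Summable fun n => (T (lam l) ^ m) (Z n) := hZsum.mapL _
  rw [← hsum2.sum_add_tsum_nat_add (m + N l), Finset.sum_eq_single m]
  · rw [hZ l m hm, H1, add_sub_cancel_left]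
    have hb : ∀ i, ‖(T (lam l) ^ m) (Z (i + (m + N l)))‖ ≤ q ^ l * q ^ i := by
      intro i
      set n := i + (m + N l) with hn
      by_cases h : ∃ l, n ∈ A l
      · obtain ⟨l', hl'⟩ := h
        have hmn : m < n := by have := hN1 l; omega
        have hgap := hA3 l l' m hm n hl' hmn
        rw [hZ l' n hl']
        have hle : ‖(T (lam l) ^ m) (z l' n)‖ ≤ Y l' * q ^ (2 * (n - m)) := by
          rcases le_or_gt (lam l) (lam l') with h | h
          · exact H3 l' l n m hmn h
          · exact H4 l' l n m hmn (hA5 l l' m hm n hl' hmn h)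
        refine hle.trans ((hNY l' (n - m) (by omega)).trans ?_)
        rw [← pow_add]
        exact pow_le_pow_of_le_one hq0.le hq1.le (by simp only [N] at hn; omega)
      · rw [hZ0 n h]; simp; positivity
    exact tsum_of_norm_bounded ((hasSum_geometric_of_lt_one hq0.le hq1).mul_left _) hb
  · intro n hn hnm
    by_cases h : ∃ l, n ∈ A l
    · obtain ⟨l', hl'⟩ := h
      rw [hZ l' n hl']
      rcases lt_or_gt_of_ne hnm with h | h
      · have := hA3 l' l n hl' m hm h
        exact H2 _ _ _ _ (by simp only [N] at this; omega)
      · have := hA3 l l' m hm n hl' h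
        simp at hn; omega
    · rw [hZ0 n h, map_zero]
  · intro h; exact absurd (Finset.mem_range.2 (by have := hN1 l; omega)) h

theorem le_of_pow_le {s t C : ℝ} (ht : 0 < t)
    (h : ∀ N : ℕ, ∃ n, N ≤ n ∧ s ^ n ≤ C * t ^ n) : s ≤ t := by
  by_contra hst
  push Not at hst
  have h1 : 1 < s / t := by rwa [one_lt_div ht]
  obtain ⟨N, hN⟩ := pow_unbounded_of_one_lt C h1
  obtain ⟨n, hn, hn2⟩ := h N
  have h2 : (s / t) ^ N ≤ (s / t) ^ n := pow_le_pow_right₀ h1.le hn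
  have h3 : (s / t) ^ n ≤ C := by
    rw [div_pow, div_le_iff₀ (by positivity)]; exact hn2
  linarith

theorem countable_aux (u : ℕ → ℝ) (E : ℝ → Set ℕ) (Λ : Set ℝ) (hΛ : Λ ⊆ Set.Ioi 0)
    (hd : ∀ l ∈ Λ, 0 < lowerDensity (E l))
    (h1 : ∀ l ∈ Λ, ∀ n ∈ E l, 1 ≤ l ^ n * u n) (h3 : ∀ l ∈ Λ, ∀ n ∈ E l, l ^ n * u n ≤ 3) :
    Λ.Countable := by
  classical
  let S : ℕ → Set ℝ := fun K => {l ∈ Λ | 1 ≤ K ∧ ∀ᶠ n : ℕ in atTop, ((n : ℝ) + 1) ≤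
      K * ∑ k ∈ Finset.range (n + 1), Set.indicator (E l) (fun _ => (1 : ℝ)) k}
  have hcov : Λ ⊆ ⋃ K, S K := by
    intro l hl
    obtain ⟨K, hK, h⟩ := of_lowerDensity_pos (hd l hl)
    exact Set.mem_iUnion.2 ⟨K, hl, hK, h⟩
  refine Set.Countable.mono hcov (Set.countable_iUnion fun K => Set.Finite.countable ?_)
  by_contra hinf
  obtain ⟨F, hFS, hFc⟩ := Set.Infinite.exists_subset_card_eq hinf (K + 1)
  have hK : 1 ≤ K := by
    have : F.Nonempty := by rw [← Finset.card_pos]; omega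
    obtain ⟨l, hl⟩ := this
    exact (hFS hl).2.1
  -- eventually pairwise disjoint
  have hdisj : ∀ a ∈ F, ∀ b ∈ F, a ≠ b → ∀ᶠ n : ℕ in atTop, ¬ (n ∈ E a ∧ n ∈ E b) := by
    have aux : ∀ a ∈ F, ∀ b ∈ F, a < b → ∀ᶠ n : ℕ in atTop, ¬ (n ∈ E a ∧ n ∈ E b) := by
      intro a ha b hb hab
      have ha0 : 0 < a := hΛ (hFS ha).1
      have hr : 1 < b / a := by rwa [one_lt_div ha0]
      filter_upwards [(tendsto_pow_atTop_atTop_of_one_lt hr).eventually_gt_atTop 3] with n hn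
      rintro ⟨hna, hnb⟩
      have e1 := h1 a (hFS ha).1 n hna
      have e2 := h3 b (hFS hb).1 n hnb
      rw [div_pow, lt_div_iff₀ (by positivity)] at hn
      have hapos : 0 < a ^ n := by positivity
      have hu : 0 < u n := by
        by_contra hu; push Not at hu; nlinarith
      nlinarith
    intro a ha b hb hab
    rcases lt_or_gt_of_ne hab with h | h
    · exact aux a ha b hb h
    · exact (aux b hb a ha h).mono fun n hn h => hn h.symm
  have hev : ∀ᶠ n : ℕ in atTop, ∀ a ∈ F, ∀ b ∈ F, a ≠ b → ¬ (n ∈ E a ∧ n ∈ E b) := by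
    rw [Filter.eventually_all_finset]; intro a ha
    rw [Filter.eventually_all_finset]; intro b hb
    by_cases hab : a = b
    · simp [hab]
    · simpa [hab] using hdisj a ha b hb hab
  obtain ⟨N0, hN0⟩ := eventually_atTop.1 hev
  have hev2 : ∀ᶠ n : ℕ in atTop, ∀ l ∈ F, ((n : ℝ) + 1) ≤
      K * ∑ k ∈ Finset.range (n + 1), Set.indicator (E l) (fun _ => (1 : ℝ)) k := by
    rw [Filter.eventually_all_finset]; intro l hl; exact (hFS hl).2.2
  obtain ⟨n, hn1, hn2⟩ := (hev2.and (eventually_ge_atTop (K * ((K + 1) * N0)))).exists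
  have hsum := Finset.sum_le_sum hn1
  rw [← Finset.mul_sum, Finset.sum_comm, Finset.sum_const, hFc, nsmul_eq_mul] at hsum
  have hb : ∑ k ∈ Finset.range (n + 1), ∑ l ∈ F, Set.indicator (E l) (fun _ => (1 : ℝ)) k ≤
      ∑ k ∈ Finset.range (n + 1), (1 + if k < N0 then (K : ℝ) else 0) := by
    refine Finset.sum_le_sum fun k _ => ?_
    by_cases hk : k < N0
    · simp only [hk, if_true]
      calc _ ≤ ∑ l ∈ F, (1 : ℝ) := Finset.sum_le_sum fun l _ =>
            Set.indicator_le_self' (fun _ _ => zero_le_one) k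
        _ = 1 + K := by simp [hFc]; ring
    · simp only [hk, if_false, add_zero]
      by_cases hex : ∃ l ∈ F, k ∈ E l
      · obtain ⟨l, hl, hkl⟩ := hex
        rw [Finset.sum_eq_single l]
        · exact Set.indicator_le_self' (fun _ _ => zero_le_one) k
        · intro b hb hbl
          rw [Set.indicator_of_notMem]
          intro hkb
          exact hN0 k (by omega) b hb l hl hbl ⟨hkb, hkl⟩
        · intro h; exact absurd hl h
      · push Not at hex
        rw [Finset.sum_eq_zero]
        · norm_num
        · intro l hl; rw [Set.indicator_of_notMem (hex l hl)]
  have hb2 : ∑ k ∈ Finset.range (n + 1), (1 + if k < N0 then (K : ℝ) else 0) ≤ (n + 1) + K * N0 := by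
    rw [Finset.sum_add_distrib, ← Finset.sum_filter]
    have : ((Finset.range (n + 1)).filter (· < N0)).card ≤ N0 := by
      calc _ ≤ (Finset.range N0).card := Finset.card_le_card (by intro k hk; simp at hk ⊢; omega)
        _ = N0 := by simp
    have h' : (((Finset.range (n + 1)).filter (· < N0)).card : ℝ) ≤ N0 := by exact_mod_cast this
    simp only [Finset.sum_const, nsmul_eq_mul, Finset.card_range]
    push_cast
    nlinarith [(Nat.cast_nonneg K : (0 : ℝ) ≤ K)]
  have hK0 : (0 : ℝ) ≤ K := Nat.cast_nonneg K
  have hn2' : (K : ℝ) * ((K + 1) * N0) ≤ n := by exact_mod_cast hn2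
  have hfin := mul_le_mul_of_nonneg_left (hb.trans hb2) hK0
  push_cast at hsum
  have : (0:ℝ) ≤ K * N0 := by positivity
  nlinarith

theorem forward_aux (v u : ℕ → ℝ) (hv0 : ∀ n, 0 ≤ v n) (E : ℝ → Set ℕ) (Λ : Set ℝ)
    (hΛ : Λ ⊆ Set.Ioi 0) (hΛ2 : ∃ a ∈ Λ, ∃ b ∈ Λ, a < b)
    (hd : ∀ l ∈ Λ, 0 < lowerDensity (E l))
    (h1 : ∀ l ∈ Λ, ∀ n ∈ E l, 1 ≤ l ^ n * u n)
    (h2 : ∀ l ∈ Λ, ∀ m ∈ E l, ∀ i, l ^ m * u (i + m) ≤ 3 * v i)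
    (r : ℝ) (hr : 0 ≤ r) (hR : ∀ R, r < R → ∃ C, ∀ n, v n ≤ C * R ^ n) :
    BddAbove Λ ∧ closure Λ ⊆ {a | 1 < a * r} := by
  have key : ∀ a ∈ Λ, ∀ b ∈ Λ, ∀ n ∈ E a, ∀ m ∈ E b, m ≤ n →
      (b / a) ^ m ≤ 3 * (a ^ (n - m) * v (n - m)) := by
    intro a ha b hb n hn m hm hmn
    have ha0 : 0 < a := hΛ ha
    have hb0 : 0 < b := hΛ hb
    have e1 := h1 a ha n hn
    have e2 := h2 b hb m hm (n - m)
    rw [Nat.sub_add_cancel hmn] at e2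
    rw [div_pow, div_le_iff₀ (by positivity)]
    have hsplit : a ^ n = a ^ (n - m) * a ^ m := by rw [← pow_add, Nat.sub_add_cancel hmn]
    calc b ^ m ≤ b ^ m * (a ^ n * u n) := le_mul_of_one_le_right (by positivity) e1
      _ = a ^ n * (b ^ m * u n) := by ring
      _ ≤ a ^ n * (3 * v (n - m)) := by gcongr
      _ = _ := by rw [hsplit]; ring
  have keyR : ∀ R, r < R → ∃ C, 0 < C ∧ ∀ a ∈ Λ, ∀ b ∈ Λ, ∀ n ∈ E a, ∀ m ∈ E b, m ≤ n →
      (b / a) ^ m ≤ C * (a * R) ^ (n - m) := by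
    intro R hrR
    obtain ⟨C, hC⟩ := hR R hrR
    refine ⟨3 * (|C| + 1), by positivity, fun a ha b hb n hn m hm hmn => ?_⟩
    refine (key a ha b hb n hn m hm hmn).trans ?_
    have ha0 : 0 < a := hΛ ha
    have hR0 : 0 < R := hr.trans_lt hrR
    calc _ ≤ 3 * (a ^ (n - m) * ((|C| + 1) * R ^ (n - m))) := by
          gcongr
          refine (hC _).trans ?_
          gcongr
          linarith [le_abs_self C]
      _ = _ := by rw [mul_pow]; ring
  have hEinf : ∀ l ∈ Λ, ∀ N : ℕ, ∃ n ∈ E l, N ≤ n := by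
    intro l hl N
    obtain ⟨K, hK, h⟩ := dens_gap (hd l hl)
    obtain ⟨M, hM, hM2⟩ := (h.and (eventually_ge_atTop N)).exists
    obtain ⟨n, hn, h1, -⟩ := hM
    exact ⟨n, hn, by omega⟩
  -- lower estimate
  have low : ∀ b ∈ Λ, ∃ K : ℕ, ∀ a ∈ Λ, a < b → b ≤ a * (a * r) ^ K ∧ 1 < a * r := by
    intro b hb
    have hb0 : 0 < b := hΛ hb
    obtain ⟨K, hK, h⟩ := dens_gap (hd b hb)
    refine ⟨2 * K, fun a ha hab => ?_⟩
    have ha0 : 0 < a := hΛ ha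
    have hba : 1 < b / a := by rwa [one_lt_div ha0]
    obtain ⟨M0, hM0⟩ := eventually_atTop.1 h
    have hRR : ∀ R, r < R → b / a ≤ (max (a * R) 1) ^ (2 * K) := by
      intro R hrR
      obtain ⟨C, hC0, hC⟩ := keyR R hrR
      refine le_of_pow_le (C := C ^ (2 * K)) (by positivity) fun N => ?_
      obtain ⟨n, hn, hNn⟩ := hEinf a ha (N + K * (M0 + 1))
      refine ⟨n, by omega, ?_⟩
      have hMM : M0 + 1 ≤ n / K := (Nat.le_div_iff_mul_le hK).2 (by rw [mul_comm]; omega)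
      obtain ⟨m, hm, hm1, hm2⟩ := hM0 (n / K) (by omega)
      have hmn : m ≤ n := hm2.trans (Nat.mul_div_le n K)
      have hmK : n ≤ m * (2 * K) := by
        have : n < K * (n / K + 1) := by
          have := Nat.div_add_mod n K
          have := Nat.mod_lt n hK
          nlinarith
        nlinarith
      calc (b / a) ^ n ≤ (b / a) ^ (m * (2 * K)) := pow_le_pow_right₀ hba.le hmK
        _ = ((b / a) ^ m) ^ (2 * K) := by rw [pow_mul]
        _ ≤ (C * (a * R) ^ (n - m)) ^ (2 * K) := by
            gcongr
            exact hC a ha b hb n hn m hm hmn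
        _ ≤ (C * (max (a * R) 1) ^ n) ^ (2 * K) := by
            have hR0 : 0 < R := hr.trans_lt hrR
            gcongr
            calc (a * R) ^ (n - m) ≤ (max (a * R) 1) ^ (n - m) := by
                  gcongr; exact le_max_left _ _
              _ ≤ _ := pow_le_pow_right₀ (le_max_right _ _) (by omega)
        _ = C ^ (2 * K) * ((max (a * R) 1) ^ (2 * K)) ^ n := by
            rw [mul_pow, ← pow_mul, ← pow_mul, mul_comm n]
    have hlim : b / a ≤ (max (a * r) 1) ^ (2 * K) := by
      have hc : Continuous fun R : ℝ => (max (a * R) 1) ^ (2 * K) := by fun_prop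
      refine ge_of_tendsto (hc.continuousWithinAt (s := Set.Ioi r) (x := r)) ?_
      filter_upwards [self_mem_nhdsWithin] with R hR
      exact hRR R hR
    have har : 1 < a * r := by
      by_contra hcon
      rw [max_eq_right (not_lt.1 hcon), one_pow] at hlim
      linarith
    rw [max_eq_left har.le, div_le_iff₀ ha0] at hlim
    exact ⟨by linarith, har⟩
  obtain ⟨a0, ha0, b0, hb0, hab⟩ := hΛ2
  have hb00 : 0 < b0 := hΛ hb0
  obtain ⟨K, hK⟩ := low b0 hb0
  have ha0r : 1 < a0 * r := (hK a0 ha0 hab).2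
  have hb0r : 1 < b0 * r := by nlinarith
  constructor
  · obtain ⟨L, hL, h⟩ := dens_gap (hd a0 ha0)
    obtain ⟨M0, hM0⟩ := eventually_atTop.1 h
    obtain ⟨C, hC0, hC⟩ := keyR (r + 1) (by linarith)
    have ha00 : 0 < a0 := hΛ ha0
    refine ⟨a0 * (a0 * (r + 1)) ^ L, fun b hb => ?_⟩
    have hb1 : 0 < b := hΛ hb
    rw [← div_le_iff₀' ha00]
    refine le_of_pow_le (C := C) (by positivity) fun N => ?_
    obtain ⟨m, hm, hNm⟩ := hEinf b hb (N + M0)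
    obtain ⟨n, hn, hn1, hn2⟩ := hM0 m (by omega)
    refine ⟨m, by omega, (hC a0 ha0 b hb n hn m hm hn1).trans ?_⟩
    rw [← pow_mul]
    gcongr
    · nlinarith
    · omega
  · have hclosed : IsClosed {a : ℝ | 0 ≤ a ∧ b0 ≤ a * (a * r) ^ K} := by
      refine IsClosed.inter (isClosed_le continuous_const continuous_id) ?_
      have hcont : Continuous fun a : ℝ => a * (a * r) ^ K := by fun_prop
      exact isClosed_le continuous_const hcont
    have hsub : Λ ⊆ {a : ℝ | 0 ≤ a ∧ b0 ≤ a * (a * r) ^ K} := by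
      intro a ha
      have ha1 : 0 < a := hΛ ha
      refine ⟨ha1.le, ?_⟩
      rcases lt_or_ge a b0 with h | h
      · exact (hK a ha h).1
      · refine h.trans (le_mul_of_one_le_right ha1.le (one_le_pow₀ ?_))
        nlinarith
    refine (closure_minimal hsub hclosed).trans ?_
    rintro a ⟨ha1, ha2⟩
    show 1 < a * r
    by_contra hcon
    push Not at hcon
    have : (a * r) ^ K ≤ 1 := pow_le_one₀ (by positivity) hcon
    have hba : b0 ≤ a := ha2.trans (mul_le_of_le_one_right ha1 this)
    have := mul_le_mul_of_nonneg_right hba hr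
    linarith

theorem growth_aux (u : ℕ → ℝ) (R : ℝ) (hR : 0 < R) (g : ℕ → ℝ≥0∞)
    (hg : ∀ n, ENNReal.ofReal (u n) ≤ g n)
    (h : Filter.limsup (fun n : ℕ => g n ^ (1 / (n : ℝ))) Filter.atTop < ENNReal.ofReal R) :
    ∃ C, 0 < C ∧ ∀ n, u n ≤ C * R ^ n := by
  have h1 := eventually_lt_of_limsup_lt h
  obtain ⟨N, hN⟩ := eventually_atTop.1 (h1.and (eventually_ge_atTop 1))
  have hlarge : ∀ n, N ≤ n → u n ≤ R ^ n := by
    intro n hn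
    obtain ⟨h2, h3⟩ := hN n hn
    have hn0 : (n : ℝ) ≠ 0 := by positivity
    have h4 : g n ≤ ENNReal.ofReal R ^ (n : ℝ) := by
      have := ENNReal.rpow_le_rpow h2.le (by positivity : (0 : ℝ) ≤ n)
      rwa [← ENNReal.rpow_mul, one_div_mul_cancel hn0, ENNReal.rpow_one] at this
    rw [ENNReal.rpow_natCast, ← ENNReal.ofReal_pow hR.le] at h4
    exact (ENNReal.ofReal_le_ofReal_iff (by positivity)).1 ((hg n).trans h4)
  refine ⟨1 + ∑ k ∈ Finset.range N, |u k| / R ^ k, ?_, fun n => ?_⟩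
  · have : 0 ≤ ∑ k ∈ Finset.range N, |u k| / R ^ k := Finset.sum_nonneg fun k _ => by positivity
    linarith
  · have hpos : 0 < R ^ n := by positivity
    by_cases hn : N ≤ n
    · have : 0 ≤ ∑ k ∈ Finset.range N, |u k| / R ^ k := Finset.sum_nonneg fun k _ => by positivity
      have := hlarge n hn
      nlinarith
    · have : |u n| / R ^ n ≤ ∑ k ∈ Finset.range N, |u k| / R ^ k :=
        Finset.single_le_sum (f := fun k => |u k| / R ^ k) (fun k _ => by positivity)
          (Finset.mem_range.2 (by omega))
      rw [div_le_iff₀ hpos] at this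
      nlinarith [le_abs_self (u n)]

section
variable {p : ℝ≥0∞} [Fact (1 ≤ p)] {w : ℕ → ℂ}
  {B : lp (fun _ : ℕ => ℂ) p →L[ℂ] lp (fun _ : ℕ => ℂ) p}

theorem orbit_coord
    (hB : ∀ x : lp (fun _ : ℕ => ℂ) p, ∀ n : ℕ, (B x) n = w (n + 1) * x (n + 1))
    (t : ℝ) (m : ℕ) (x : lp (fun _ : ℕ => ℂ) p) (i : ℕ) :
    ((((t : ℂ) • B) ^ m) x) i * (∏ k ∈ Finset.Icc 1 i, w k) =
      (t : ℂ) ^ m * (∏ k ∈ Finset.Icc 1 (i + m), w k) * x (i + m) := by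
  induction m generalizing i with
  | zero => simp [mul_comm]
  | succ m ih =>
    rw [pow_succ', mul_apply_eq_comp, smul_apply,
      lp.coeFn_smul, Pi.smul_apply, hB, smul_eq_mul]
    have h1 : ∏ k ∈ Finset.Icc 1 (i + 1), w k = (∏ k ∈ Finset.Icc 1 i, w k) * w (i + 1) :=
      Finset.prod_Icc_succ_top (by omega) _
    have h2 := ih (i + 1)
    rw [h1, show i + 1 + m = i + (m + 1) by ring] at h2
    rw [pow_succ]
    linear_combination (t : ℂ) * h2

theorem orbit_single (hw0 : ∀ n : ℕ, 1 ≤ n → w n ≠ 0)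
    (hB : ∀ x : lp (fun _ : ℕ => ℂ) p, ∀ n : ℕ, (B x) n = w (n + 1) * x (n + 1))
    (t : ℝ) (m k : ℕ) :
    (((t : ℂ) • B) ^ m) (lp.single p (k + m) (1 : ℂ)) =
      ((t : ℂ) ^ m * ((∏ k ∈ Finset.Icc 1 (k + m), w k) / (∏ k ∈ Finset.Icc 1 k, w k))) •
        lp.single p k (1 : ℂ) := by
  have hP : ∀ i, (∏ k ∈ Finset.Icc 1 i, w k) ≠ 0 := fun i =>
    Finset.prod_ne_zero_iff.2 fun j hj => hw0 j (Finset.mem_Icc.1 hj).1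
  ext i
  refine mul_right_cancel₀ (hP i) ?_
  rw [orbit_coord hB, lp.coeFn_smul, Pi.smul_apply, smul_eq_mul]
  by_cases hik : i = k
  · subst hik
    rw [lp.single_apply_self, lp.single_apply_self]
    have := hP i
    field_simp
  · rw [lp.single_apply_ne _ _ _ (by omega), lp.single_apply_ne _ _ _ hik]
    simp

theorem orbit_single_zero (hw0 : ∀ n : ℕ, 1 ≤ n → w n ≠ 0)
    (hB : ∀ x : lp (fun _ : ℕ => ℂ) p, ∀ n : ℕ, (B x) n = w (n + 1) * x (n + 1))
    (t : ℝ) (m k : ℕ) (hk : k < m) :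
    (((t : ℂ) • B) ^ m) (lp.single p k (1 : ℂ)) = 0 := by
  have hP : ∀ i, (∏ k ∈ Finset.Icc 1 i, w k) ≠ 0 := fun i =>
    Finset.prod_ne_zero_iff.2 fun j hj => hw0 j (Finset.mem_Icc.1 hj).1
  ext i
  refine mul_right_cancel₀ (hP i) ?_
  rw [orbit_coord hB, lp.single_apply_ne _ _ _ (by omega)]
  simp

theorem dense_aux (hp : p ≠ ⊤) (x : lp (fun _ : ℕ => ℂ) p) (ε : ℝ) (hε : 0 < ε) :
    ∃ (s : Σ n : ℕ, (Fin n → ℕ)),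
      ‖(∑ i ∈ Finset.range s.1, (if h : i < s.1 then TopologicalSpace.denseSeq ℂ (s.2 ⟨i, h⟩) else 0) •
        lp.single p i (1 : ℂ)) - x‖ < ε := by
  have hs := (lp.hasSum_single hp x).tendsto_sum_nat
  have h1 := (Metric.tendsto_nhds.1 hs (ε / 2) (by positivity)).exists
  obtain ⟨n, hn⟩ := h1
  have h2 : ∀ i : ℕ, ∃ j : ℕ, dist (x i) (TopologicalSpace.denseSeq ℂ j) < ε / (2 * (n + 1)) := fun i =>
    (TopologicalSpace.denseRange_denseSeq ℂ).exists_dist_lt (x i) (by positivity)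
  choose j hj using h2
  refine ⟨⟨n, fun i => j i⟩, ?_⟩
  rw [dist_eq_norm] at hn
  have h3 : ‖(∑ i ∈ Finset.range n, (if h : i < n then TopologicalSpace.denseSeq ℂ (j i) else 0) •
        lp.single p i (1 : ℂ)) - ∑ i ∈ Finset.range n, lp.single p i (x i)‖ ≤ ε / 2 := by
    rw [← Finset.sum_sub_distrib]
    calc _ ≤ ∑ i ∈ Finset.range n, ε / (2 * ((n : ℝ) + 1)) := by
          refine norm_sum_le_of_le _ fun i hi => ?_
          rw [dif_pos (Finset.mem_range.1 hi), ← lp.single_smul, smul_eq_mul, mul_one,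
            ← lp.single_sub, lp.norm_single (zero_lt_one.trans_le Fact.out), ← dist_eq_norm, dist_comm]
          exact (hj i).le
      _ = n * (ε / (2 * ((n : ℝ) + 1))) := by simp
      _ ≤ ε / 2 := by
          rw [mul_div_assoc', div_le_div_iff₀ (by positivity) (by positivity)]
          nlinarith
  calc _ ≤ _ := norm_sub_le_norm_sub_add_norm_sub _ (∑ i ∈ Finset.range n, lp.single p i (x i)) x
    _ < ε := by
      have := add_lt_add_of_le_of_lt h3 hn
      rwa [add_halves] at this

end

theorem backward_main (p : ℝ≥0∞) [Fact (1 ≤ p)] (hp : p ≠ ⊤)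
    (w : ℕ → ℂ) (hw0 : ∀ n : ℕ, 1 ≤ n → w n ≠ 0)
    (B : lp (fun _ : ℕ => ℂ) p →L[ℂ] lp (fun _ : ℕ => ℂ) p)
    (hB : ∀ x : lp (fun _ : ℕ => ℂ) p, ∀ n : ℕ, (B x) n = w (n + 1) * x (n + 1))
    (Λ : Set ℝ) (hne : Λ.Nonempty) (hcount : Λ.Countable) (α β ρ C : ℝ)
    (hρ : 0 < ρ) (hρα : ρ < α) (hα : ∀ l ∈ Λ, α ≤ l) (hβ : ∀ l ∈ Λ, l ≤ β)
    (hC0 : 0 < C) (hC : ∀ n, (∏ k ∈ Finset.Icc 1 n, ‖w k‖)⁻¹ ≤ C * ρ ^ n) :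
    (⋂ l ∈ Λ, FHC ((l : ℂ) • B)).Nonempty := by
  classical
  have hα0 : 0 < α := hρ.trans hρα
  have hp0 : 0 < p := zero_lt_one.trans_le Fact.out
  have hP : ∀ i, (∏ k ∈ Finset.Icc 1 i, w k) ≠ 0 := fun i =>
    Finset.prod_ne_zero_iff.2 fun j hj => hw0 j (Finset.mem_Icc.1 hj).1
  -- enumeration
  have : Countable Λ := hcount.to_subtype
  have : Nonempty Λ := hne.to_subtype
  obtain ⟨en, hen⟩ := exists_surjective_nat (Λ × (Σ n : ℕ, (Fin n → ℕ)) × ℕ)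
  let lam : ℕ → ℝ := fun l => (en l).1
  let D : ℕ → ℕ := fun l => (en l).2.1.1
  let c : ℕ → ℕ → ℂ := fun l i =>
    if h : i < D l then TopologicalSpace.denseSeq ℂ ((en l).2.1.2 ⟨i, h⟩) else 0
  let P : ℕ → ℂ := fun n => ∏ k ∈ Finset.Icc 1 n, w k
  have hP' : ∀ i, P i ≠ 0 := hP
  have hPC : ∀ n, ‖P n‖⁻¹ ≤ C * ρ ^ n := by
    intro n; simp only [P, norm_prod]; exact hC n
  let e : ℕ → lp (fun _ : ℕ => ℂ) p := fun k => lp.single p k (1 : ℂ)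
  have he : ∀ k, ‖e k‖ = 1 := fun k => by simp only [e]; rw [lp.norm_single hp0]; simp
  let y : ℕ → lp (fun _ : ℕ => ℂ) p := fun l => ∑ i ∈ Finset.range (D l), c l i • e i
  let z : ℕ → ℕ → lp (fun _ : ℕ => ℂ) p := fun l n => ∑ i ∈ Finset.range (D l),
    (c l i * ((lam l : ℂ) ^ n)⁻¹ * (P i / P (n + i))) • e (n + i)
  let Y : ℕ → ℝ := fun l => ∑ i ∈ Finset.range (D l), ‖c l i‖ * ‖P i‖ * (C * ρ ^ i)
  have hY0 : ∀ l, 0 ≤ Y l := fun l => Finset.sum_nonneg fun i _ => by positivity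
  have hlamΛ : ∀ l, lam l ∈ Λ := fun l => (en l).1.2
  have hlam0 : ∀ l, 0 < lam l := fun l => hα0.trans_le (hα _ (hlamΛ l))
  have hTz : ∀ l n m t, m ≤ n → ((((t : ℝ) : ℂ) • B) ^ m) (z l n) = ∑ i ∈ Finset.range (D l),
      (c l i * ((lam l : ℂ) ^ n)⁻¹ * (t : ℂ) ^ m * (P i / P (n - m + i))) • e (n - m + i) := by
    intro l n m t hmn
    simp only [z, map_sum, map_smul]
    refine Finset.sum_congr rfl fun i _ => ?_
    have h1 : n + i = (n - m + i) + m := by omega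
    have h2 := orbit_single hw0 hB t m (n - m + i)
    rw [← h1] at h2
    simp only [e]
    rw [h2, smul_smul]
    congr 1
    have h3 := hP (n + i)
    have h4 := hP (n - m + i)
    simp only [P]
    field_simp
  have hgen : ∀ l n m t, 0 ≤ t → m ≤ n → ‖((((t : ℝ) : ℂ) • B) ^ m) (z l n)‖ ≤
      Y l * (t ^ m * (lam l ^ n)⁻¹ * ρ ^ (n - m)) := by
    intro l n m t ht hmn
    rw [hTz l n m t hmn, Finset.sum_mul]
    refine norm_sum_le_of_le _ fun i _ => ?_
    rw [norm_smul, he, mul_one, norm_mul, norm_mul, norm_mul, norm_div, norm_inv, norm_pow, norm_pow,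
      Complex.norm_real, Complex.norm_real, Real.norm_of_nonneg ht, Real.norm_of_nonneg (hlam0 l).le]
    have := hlam0 l
    calc ‖c l i‖ * (lam l ^ n)⁻¹ * t ^ m * (‖P i‖ / ‖P (n - m + i)‖)
        = ‖c l i‖ * (lam l ^ n)⁻¹ * t ^ m * ‖P i‖ * ‖P (n - m + i)‖⁻¹ := by ring
      _ ≤ ‖c l i‖ * (lam l ^ n)⁻¹ * t ^ m * ‖P i‖ * (C * ρ ^ (n - m + i)) := by
          gcongr; exact hPC _
      _ = _ := by rw [pow_add]; ring
  -- q
  let q : ℝ := Real.sqrt (Real.sqrt (ρ / α))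
  have hq0 : 0 < q := Real.sqrt_pos.2 (Real.sqrt_pos.2 (by positivity))
  have hq4 : q ^ 4 = ρ / α := by
    have h1 : q ^ 2 = Real.sqrt (ρ / α) := Real.sq_sqrt (Real.sqrt_nonneg _)
    have h2 : Real.sqrt (ρ / α) ^ 2 = ρ / α := Real.sq_sqrt (by positivity)
    calc q ^ 4 = (q ^ 2) ^ 2 := by ring
      _ = _ := by rw [h1, h2]
  have hq1 : q < 1 := by
    have h1 : ρ / α < 1 := (div_lt_one hα0).2 hρα
    by_contra hcon
    have := one_le_pow₀ (not_lt.1 hcon) (n := 4)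
    linarith
  have hβ0 : 0 < β := by
    obtain ⟨l, hl⟩ := hne
    exact (hα0.trans_le (hα l hl)).trans_le (hβ l hl)
  obtain ⟨j, hj⟩ : ∃ j : ℕ, (β / α) * (q ^ 2) ^ j ≤ 1 := by
    have : Tendsto (fun N : ℕ => (β / α) * (q ^ 2) ^ N) atTop (𝓝 ((β / α) * 0)) :=
      (tendsto_pow_atTop_nhds_zero_of_lt_one (by positivity) (by nlinarith)).const_mul _
    rw [mul_zero] at this
    exact ((this.eventually (gt_mem_nhds zero_lt_one)).exists).imp fun N h => h.le
  have hbd : ∀ l n m (t : ℝ), 0 ≤ t → m ≤ n →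
      t ^ m * (lam l ^ n)⁻¹ * ρ ^ (n - m) ≤ (t / lam l) ^ m * (q ^ (2 * (n - m)) * q ^ (2 * (n - m))) := by
    intro l n m t ht hmn
    have hl := hlam0 l
    have hle : ρ / lam l ≤ q ^ 4 := by
      rw [hq4]; gcongr; exact hα _ (hlamΛ l)
    have : t ^ m * (lam l ^ n)⁻¹ * ρ ^ (n - m) = (t / lam l) ^ m * (ρ / lam l) ^ (n - m) := by
      have hsplit : lam l ^ n = lam l ^ (n - m) * lam l ^ m := by rw [← pow_add, Nat.sub_add_cancel hmn]
      rw [hsplit, div_pow, div_pow]; field_simp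
    rw [this]
    calc _ ≤ (t / lam l) ^ m * (q ^ 4) ^ (n - m) := by gcongr
      _ = _ := by rw [← pow_mul, ← pow_add]; congr 2; omega
  have hqle : ∀ k, q ^ k ≤ 1 := fun k => pow_le_one₀ hq0.le hq1.le
  obtain ⟨x, hx⟩ := exists_common (fun t : ℝ => (t : ℂ) • B) lam z y Y D q hq0 hq1 (j + 1)
    (by
      intro l n
      have h1 := hgen l n 0 1 (by norm_num) (by omega)
      have h2 := hbd l n 0 1 (by norm_num) (by omega)
      simp only [pow_zero, one_mul, Nat.sub_zero] at h1 h2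
      rw [one_apply_eq_self] at h1
      refine h1.trans (mul_le_mul_of_nonneg_left (h2.trans ?_) (hY0 l))
      exact mul_le_of_le_one_left (by positivity) (hqle _))
    (by
      intro l n
      show ((((lam l : ℝ) : ℂ) • B) ^ n) (z l n) = y l
      rw [hTz l n n _ le_rfl]
      refine Finset.sum_congr rfl fun i _ => ?_
      have h1 : (lam l : ℂ) ≠ 0 := by exact_mod_cast (hlam0 l).ne'
      have h2 := hP' i
      simp only [Nat.sub_self, zero_add]
      congr 1
      field_simp)
    (by
      intro l n m t hm
      simp only [z, map_sum, map_smul]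
      refine Finset.sum_eq_zero fun i hi => ?_
      have := orbit_single_zero hw0 hB t m (n + i) (by have := Finset.mem_range.1 hi; omega)
      simp only [e]
      rw [this, smul_zero])
    (by
      intro l l' n m hmn hle
      have hl := hlam0 l
      have hl' := hlam0 l'
      refine (hgen l n m (lam l') hl'.le hmn.le).trans
        (mul_le_mul_of_nonneg_left ((hbd l n m _ hl'.le hmn.le).trans ?_) (hY0 l))
      have h1 : (lam l' / lam l) ^ m ≤ 1 := pow_le_one₀ (by positivity) ((div_le_one hl).2 hle)
      calc _ ≤ 1 * (1 * q ^ (2 * (n - m))) := by gcongr; exact hqle _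
        _ = _ := by ring)
    (by
      intro l l' n m hmn hle
      have hl := hlam0 l
      have hl' := hlam0 l'
      refine (hgen l n m (lam l') hl'.le hmn.le).trans
        (mul_le_mul_of_nonneg_left ((hbd l n m _ hl'.le hmn.le).trans ?_) (hY0 l))
      have h1 : (lam l' / lam l) ^ m ≤ (β / α) ^ m := by
        gcongr
        · exact hβ _ (hlamΛ l')
        · exact hα _ (hlamΛ l)
      have h2 : q ^ (2 * (n - m)) ≤ ((q ^ 2) ^ j) ^ m := by
        rw [← pow_mul, ← pow_mul]
        refine pow_le_pow_of_le_one hq0.le hq1.le ?_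
        have : j * m ≤ n - m := by
          have : m * (j + 1) = j * m + m := by ring
          omega
        nlinarith
      calc _ ≤ (β / α) ^ m * (((q ^ 2) ^ j) ^ m * q ^ (2 * (n - m))) := by gcongr
        _ = ((β / α) * (q ^ 2) ^ j) ^ m * q ^ (2 * (n - m)) := by rw [mul_pow]; ring
        _ ≤ 1 * q ^ (2 * (n - m)) := by
            gcongr
            exact pow_le_one₀ (by positivity) hj
        _ = _ := one_mul _)
  refine ⟨x, Set.mem_iInter₂.2 fun t ht U hU hUne => ?_⟩
  obtain ⟨u, hu⟩ := hUne
  obtain ⟨ε, hε, hball⟩ := Metric.isOpen_iff.1 hU u hu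
  obtain ⟨s, hs⟩ := dense_aux hp u (ε / 2) (by positivity)
  -- a large index l
  choose g hg using fun k : ℕ => hen (⟨t, ht⟩, s, k)
  have hginj : Function.Injective g := by
    intro a b hab
    have := (hg a).symm.trans ((congrArg en hab).trans (hg b))
    simpa using this
  have htend : Tendsto (fun k => q ^ (g k) * (1 - q)⁻¹) atTop (𝓝 (0 * (1 - q)⁻¹)) :=
    ((tendsto_pow_atTop_nhds_zero_of_lt_one hq0.le hq1).comp hginj.nat_tendsto_atTop).mul_const _
  rw [zero_mul] at htend
  obtain ⟨k, hk⟩ := (htend.eventually (gt_mem_nhds (half_pos hε))).exists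
  have hlamg : lam (g k) = t := by simp only [lam, hg k]
  have hyg : ‖y (g k) - u‖ < ε / 2 := by
    have hyy : ∀ (a : Λ × (Σ n : ℕ, (Fin n → ℕ)) × ℕ), a = (⟨t, ht⟩, s, k) →
        ‖(∑ i ∈ Finset.range a.2.1.1, (if h : i < a.2.1.1 then
          TopologicalSpace.denseSeq ℂ (a.2.1.2 ⟨i, h⟩) else 0) • lp.single p i (1 : ℂ)) - u‖ < ε / 2 := by
      rintro a rfl; exact hs
    exact hyy _ (hg k)
  obtain ⟨A, hA, hA2⟩ := hx (g k)
  obtain ⟨K, hK1, hK⟩ := of_lowerDensity_pos hA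
  refine lowerDensity_pos_of (c := 1 / K) (by positivity) ?_
  filter_upwards [hK] with n hn
  have hK0 : (0 : ℝ) < K := by exact_mod_cast hK1
  rw [div_mul_eq_mul_div, one_mul, div_le_iff₀' hK0]
  refine hn.trans ?_
  gcongr with i hi
  intro m hm
  refine hball ?_
  rw [Metric.mem_ball, dist_eq_norm]
  have h1 := hA2 m hm
  rw [hlamg] at h1
  calc _ ≤ _ := norm_sub_le_norm_sub_add_norm_sub _ (y (g k)) u
    _ < ε := by
      have := add_lt_add (h1.trans_lt hk) hyg
      rwa [add_halves] at this

theorem forward_main (p : ℝ≥0∞) [Fact (1 ≤ p)]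
    (w : ℕ → ℂ) (hw0 : ∀ n : ℕ, 1 ≤ n → w n ≠ 0)
    (B : lp (fun _ : ℕ => ℂ) p →L[ℂ] lp (fun _ : ℕ => ℂ) p)
    (hB : ∀ x : lp (fun _ : ℕ => ℂ) p, ∀ n : ℕ, (B x) n = w (n + 1) * x (n + 1))
    (Λ : Set ℝ) (hΛpos : Λ ⊆ Set.Ioi (0 : ℝ))
    (hΛ2 : ∃ a ∈ Λ, ∃ b ∈ Λ, a < b) (r : ℝ) (hr : 0 ≤ r)
    (hR : ∀ R, r < R → ∃ C, ∀ n, (∏ k ∈ Finset.Icc 1 n, ‖w k‖) ≤ C * R ^ n)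
    (h : (⋂ l ∈ Λ, FHC ((l : ℂ) • B)).Nonempty) :
    Λ.Countable ∧ BddAbove Λ ∧ closure Λ ⊆ {a | 1 < a * r} := by
  obtain ⟨x, hx⟩ := h
  rw [Set.mem_iInter₂] at hx
  have hp0 : p ≠ 0 := (zero_lt_one.trans_le (Fact.out : 1 ≤ p)).ne'
  let v : ℕ → ℝ := fun n => ∏ k ∈ Finset.Icc 1 n, ‖w k‖
  have hv0 : ∀ n, 0 ≤ v n := fun n => Finset.prod_nonneg fun k _ => norm_nonneg _
  let u : ℕ → ℝ := fun n => v n * ‖x n‖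
  let E : ℝ → Set ℕ := fun l =>
    {n | (((l : ℂ) • B) ^ n) x ∈ Metric.ball (lp.single p 0 (2 : ℂ)) 1}
  have hcoord : ∀ l ∈ Λ, ∀ m i, ‖((((l : ℂ) • B) ^ m) x) i‖ * v i = l ^ m * u (i + m) := by
    intro l hl m i
    have hl0 : 0 < l := hΛpos hl
    have := congrArg norm (orbit_coord hB l m x i)
    rw [norm_mul, norm_mul, norm_mul, norm_pow, norm_prod, norm_prod, Complex.norm_real,
      Real.norm_of_nonneg hl0.le] at this
    simp only [u, v]; rw [this]; ring
  have hball : ∀ l, ∀ m ∈ E l, ∀ i,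
      ‖((((l : ℂ) • B) ^ m) x) i - (lp.single p 0 (2 : ℂ) : lp (fun _ : ℕ => ℂ) p) i‖ < 1 := by
    intro l m hm i
    have h1 : ‖(((l : ℂ) • B) ^ m) x - lp.single p 0 (2 : ℂ)‖ < 1 := by
      rw [← dist_eq_norm]; exact hm
    have h2 := lp.norm_apply_le_norm hp0 ((((l : ℂ) • B) ^ m) x - lp.single p 0 (2 : ℂ)) i
    rw [lp.coeFn_sub, Pi.sub_apply] at h2
    exact h2.trans_lt h1
  have hle3 : ∀ l ∈ Λ, ∀ m ∈ E l, ∀ i, l ^ m * u (i + m) ≤ 3 * v i := by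
    intro l hl m hm i
    rw [← hcoord l hl]
    refine mul_le_mul_of_nonneg_right ?_ (hv0 i)
    have h1 := hball l m hm i
    have h2 : ‖(lp.single p 0 (2 : ℂ) : lp (fun _ : ℕ => ℂ) p) i‖ ≤ 2 := by
      by_cases hi : i = 0
      · subst hi; rw [lp.single_apply_self]; simp
      · rw [lp.single_apply_ne _ _ _ hi]; simp
    have h3 := norm_le_norm_add_norm_sub' (((((l : ℂ) • B) ^ m) x) i)
      ((lp.single p 0 (2 : ℂ) : lp (fun _ : ℕ => ℂ) p) i)
    linarith
  have hge1 : ∀ l ∈ Λ, ∀ n ∈ E l, 1 ≤ l ^ n * u n := by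
    intro l hl n hn
    have h0 := hcoord l hl n 0
    have hv00 : v 0 = 1 := by simp [v]
    rw [zero_add, hv00, mul_one] at h0
    rw [← h0]
    have h1 := hball l n hn 0
    rw [lp.single_apply_self] at h1
    have h3 := norm_le_norm_add_norm_sub (((((l : ℂ) • B) ^ n) x) 0) (2 : ℂ)
    rw [Complex.norm_ofNat] at h3
    linarith
  have hd : ∀ l ∈ Λ, 0 < lowerDensity (E l) := fun l hl =>
    hx l hl _ Metric.isOpen_ball ⟨_, Metric.mem_ball_self one_pos⟩
  refine ⟨countable_aux u E Λ hΛpos hd hge1 ?_, ?_⟩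
  · intro l hl n hn
    have := hle3 l hl n hn 0
    simpa [v] using this
  · exact forward_aux v u hv0 E Λ hΛpos hΛ2 hd hge1 hle3 r hr hR

/-- Corollary 2.26: if `λ_w = r_{p,w}` and `Λ ⊆ (0,∞)` has at least two elements,
then the multiples `λB_w`, `λ ∈ Λ`, share a frequently hypercyclic vector if and only
if `Λ` is countable and relatively compact in `(r_{p,w}⁻¹, +∞)`. The weighted backward
shift is encoded as a bounded operator `B` with `(B x) n = w (n+1) * x (n+1)`. -/
theorem stmt12 (p : ℝ≥0∞) [Fact (1 ≤ p)] (hp : p ≠ ⊤)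
    (w : ℕ → ℂ) (hw0 : ∀ n : ℕ, 1 ≤ n → w n ≠ 0)
    (hwbdd : ∃ A : ℝ, ∀ n : ℕ, ‖w n‖ ≤ A)
    (B : lp (fun _ : ℕ => ℂ) p →L[ℂ] lp (fun _ : ℕ => ℂ) p)
    (hB : ∀ x : lp (fun _ : ℕ => ℂ) p, ∀ n : ℕ, (B x) n = w (n + 1) * x (n + 1))
    (Λ : Set ℝ) (hΛpos : Λ ⊆ Set.Ioi (0 : ℝ))
    (hΛ2 : ∃ a ∈ Λ, ∃ b ∈ Λ, a ≠ b)
    (hlr : lamw w = (rpwInv w)⁻¹) :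
    (⋂ l ∈ Λ, FHC ((l : ℂ) • B)).Nonempty ↔
      (Λ.Countable ∧ IsCompact (closure Λ) ∧
        closure Λ ⊆ {l : ℝ | rpwInv w < ENNReal.ofReal l}) := by
  obtain ⟨A, hA⟩ := hwbdd
  have hA0 : 0 ≤ A := (norm_nonneg _).trans (hA 0)
  have hprod : ∀ n, ∏ k ∈ Finset.Icc 1 n, (‖w k‖₊ : ℝ≥0∞) =
      ENNReal.ofReal (∏ k ∈ Finset.Icc 1 n, ‖w k‖) := by
    intro n
    rw [ENNReal.ofReal_prod_of_nonneg fun k _ => norm_nonneg _]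
    refine Finset.prod_congr rfl fun k _ => ?_
    rw [ofReal_norm_eq_enorm, enorm_eq_nnnorm]
  have hvpos : ∀ n, 0 < ∏ k ∈ Finset.Icc 1 n, ‖w k‖ := fun n =>
    Finset.prod_pos fun k hk => norm_pos_iff.2 (hw0 k (Finset.mem_Icc.1 hk).1)
  have hlt : lamw w < ⊤ := by
    refine lt_of_le_of_lt (b := ENNReal.ofReal A) ?_ ENNReal.ofReal_lt_top
    refine limsup_le_of_le (by isBoundedDefault) ?_
    filter_upwards [eventually_ge_atTop 1] with n hn
    have hn0 : (n : ℝ) ≠ 0 := by positivity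
    have h1 : ∏ k ∈ Finset.Icc 1 n, (‖w k‖₊ : ℝ≥0∞) ≤ ENNReal.ofReal A ^ (n : ℝ) := by
      rw [ENNReal.rpow_natCast, ← ENNReal.ofReal_pow hA0, hprod]
      refine ENNReal.ofReal_le_ofReal ?_
      calc _ ≤ ∏ k ∈ Finset.Icc 1 n, A := Finset.prod_le_prod (fun _ _ => norm_nonneg _) fun k _ => hA k
        _ = A ^ n := by simp
    have := ENNReal.rpow_le_rpow h1 (by positivity : (0 : ℝ) ≤ 1 / n)
    rwa [← ENNReal.rpow_mul, mul_one_div_cancel hn0, ENNReal.rpow_one] at this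
  constructor
  · intro h
    have hΛ2' : ∃ a ∈ Λ, ∃ b ∈ Λ, a < b := by
      obtain ⟨a, ha, b, hb, hab⟩ := hΛ2
      rcases lt_or_gt_of_ne hab with h | h
      · exact ⟨a, ha, b, hb, h⟩
      · exact ⟨b, hb, a, ha, h⟩
    obtain ⟨h1, h2, h3⟩ := forward_main p w hw0 B hB Λ hΛpos hΛ2' (lamw w).toReal
      ENNReal.toReal_nonneg (by
        intro R hR
        have hR0 : 0 < R := ENNReal.toReal_nonneg.trans_lt hR
        obtain ⟨C, -, hC⟩ := growth_aux _ R hR0 _ (fun n => (hprod n).ge)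
          ((ENNReal.lt_ofReal_iff_toReal_lt hlt.ne).2 hR)
        exact ⟨C, hC⟩) h
    refine ⟨h1, ?_, fun a ha => ?_⟩
    · refine Bornology.IsBounded.isCompact_closure ?_
      exact isBounded_iff_bddBelow_bddAbove.2 ⟨⟨0, fun a ha => (hΛpos ha).le⟩, h2⟩
    · have har : 1 < a * (lamw w).toReal := h3 ha
      have hr0 : 0 < (lamw w).toReal := by
        refine lt_of_le_of_ne ENNReal.toReal_nonneg fun h0 => ?_
        rw [← h0] at har; norm_num at har
      have e1 : rpwInv w = ENNReal.ofReal ((lamw w).toReal)⁻¹ := by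
        rw [ENNReal.ofReal_inv_of_pos hr0, ENNReal.ofReal_toReal hlt.ne, hlr, inv_inv]
      have ha0 : 0 < a := by
        by_contra hcon
        nlinarith
      show rpwInv w < ENNReal.ofReal a
      rw [e1, ENNReal.ofReal_lt_ofReal_iff ha0, inv_lt_iff_one_lt_mul₀ hr0]
      exact har
  · rintro ⟨hcount, hcpt, hsub⟩
    have hne : Λ.Nonempty := by
      obtain ⟨a, ha, -⟩ := hΛ2
      exact ⟨a, ha⟩
    obtain ⟨α, hαmem, hα⟩ := hcpt.exists_isLeast hne.closure
    obtain ⟨β, hβ⟩ := hcpt.bddAbove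
    have hαr : rpwInv w < ENNReal.ofReal α := hsub hαmem
    obtain ⟨t, ht1, ht2⟩ := exists_between hαr
    have htop : t ≠ ⊤ := (ht2.trans ENNReal.ofReal_lt_top).ne
    have hρ0 : 0 < t.toReal := ENNReal.toReal_pos (pos_of_gt ht1).ne' htop
    have hρα : t.toReal < α := (ENNReal.lt_ofReal_iff_toReal_lt htop).1 ht2
    obtain ⟨C, hC0, hC⟩ := growth_aux (fun n => (∏ k ∈ Finset.Icc 1 n, ‖w k‖)⁻¹) t.toReal hρ0
      (fun n => (∏ k ∈ Finset.Icc 1 n, (‖w k‖₊ : ℝ≥0∞))⁻¹)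
      (fun n => by
        rw [ENNReal.ofReal_inv_of_pos (hvpos n), hprod])
      (by rw [ENNReal.ofReal_toReal htop]; exact ht1)
    exact backward_main p hp w hw0 B hB Λ hne hcount α β t.toReal C hρ0 hρα
      (fun l hl => hα (subset_closure hl)) (fun l hl => hβ (subset_closure hl)) hC0 hC
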